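/- Let m ≥ 3 be odd and k ≥ 1 an integer, and suppose the continuous map f : I → I has a period-(2^k·m) point. Then f has a period-(2^k·(m+2)) point and a period-(2^{k+1}·3) point. -/

import Mathlib

/-- `x` is a periodic point of `f` with least period `m`. -/
def PeriodPt (f : ℝ → ℝ) (m : ℕ) (x : ℝ) : Prop :=
  f^[m] x = x ∧ ∀ i : ℕ, 0 < i → i < m → f^[i] x ≠ x

open Set Function

lemma aux_last {h : ℝ → ℝ} (hc : Continuous h) {s t c : ℝ} (hst : s ≤ t) (h1 : h s ≤ c)
    (h2 : c < h t) : ∃ u, s ≤ u ∧ u < t ∧ h u = c ∧ ∀ x, u < x → x ≤ t → c < h x := by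
  have hK : IsCompact (Icc s t ∩ h ⁻¹' (Iic c)) :=
    isCompact_Icc.inter_right (isClosed_Iic.preimage hc)
  obtain ⟨u, ⟨⟨hu1, hu2⟩, hu3⟩, hu4⟩ := hK.exists_isGreatest ⟨s, ⟨le_refl _, hst⟩, h1⟩
  have hu3' : h u ≤ c := hu3
  have hlt : u < t := by
    rcases hu2.lt_or_eq with h | h
    · exact h
    · subst h; linarith
  have key : ∀ x, u < x → x ≤ t → c < h x := by
    intro x hx hxt
    by_contra hcon
    have := hu4 (show x ∈ Icc s t ∩ h ⁻¹' (Iic c) from ⟨⟨by linarith, hxt⟩, not_lt.mp hcon⟩)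
    linarith
  refine ⟨u, hu1, hlt, ?_, key⟩
  obtain ⟨w, ⟨hw1, hw2⟩, hw3⟩ := intermediate_value_Icc hu2 hc.continuousOn ⟨hu3', h2.le⟩
  rcases hw1.lt_or_eq with h | h
  · have := key w h hw2; linarith
  · rw [h]; exact hw3

lemma aux_first {h : ℝ → ℝ} (hc : Continuous h) {s t c : ℝ} (hst : s ≤ t) (h1 : c < h s)
    (h2 : h t ≤ c) : ∃ u, s < u ∧ u ≤ t ∧ h u = c ∧ ∀ x, s ≤ x → x < u → c < h x := by
  obtain ⟨u, a1, a2, a3, a4⟩ := aux_last (h := fun x => h (-x)) (hc.comp continuous_neg)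
    (s := -t) (t := -s) (c := c) (by linarith) (by simpa using h2) (by simpa using h1)
  refine ⟨-u, by linarith, by linarith, a3, fun x hx hxu => ?_⟩
  simpa using a4 (-x) (by linarith) (by linarith)

/-- The basic configuration. -/
lemma setup {f : ℝ → ℝ} (hf : Continuous f) {m : ℕ} (hm : 3 ≤ m) {x0 : ℝ}
    (hx : minimalPeriod f x0 = m) :
    ∃ p b v y : ℝ, minimalPeriod f p = m ∧ f b = p ∧ f^[m - 1] p = b ∧ p ≤ y ∧ y < v ∧ v < b ∧
      f v = b ∧ f (f y) = y ∧ (∀ x, y < x → x ≤ v → f (f x) < x) ∧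
      (∀ x, y ≤ x → x ≤ v → x < f x) ∧ ∀ i, p ≤ f^[i] p := by
  have hx0 : x0 ∈ periodicPts f := minimalPeriod_pos_iff_mem_periodicPts.mp (by omega)
  obtain ⟨i0, -, hi0⟩ := Finset.exists_min_image (Finset.range m) (fun i => f^[i] x0)
    ⟨0, by simp; omega⟩
  obtain ⟨p, hp⟩ : ∃ p, p = f^[i0] x0 := ⟨_, rfl⟩
  have hpm : minimalPeriod f p = m := by
    rw [hp, minimalPeriod_apply_iterate hx0, hx]
  have hmin : ∀ i, p ≤ f^[i] p := by
    intro i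
    rw [hp, ← iterate_add_apply, ← iterate_mod_minimalPeriod_eq (n := i + i0), hx]
    exact hi0 _ (by simpa using Nat.mod_lt _ (by omega))
  have hpp : f^[m] p = p := by rw [← hpm]; exact iterate_minimalPeriod
  have hne : ∀ i, 0 < i → i < m → f^[i] p ≠ p := by
    intro i h1 h2 h3
    have := IsPeriodicPt.minimalPeriod_le h1 h3
    omega
  obtain ⟨b, hb⟩ : ∃ b, b = f^[m-1] p := ⟨_, rfl⟩
  have hfb : f b = p := by
    rw [hb, ← iterate_succ_apply' f, show (m-1).succ = m by omega, hpp]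
  have hpb : p < b := lt_of_le_of_ne (hb ▸ hmin (m-1)) (hb ▸ (hne (m-1) (by omega) (by omega)).symm)
  obtain ⟨i, hi1, hi2⟩ : ∃ i, f^[i] p < b ∧ b ≤ f^[i+1] p := by
    by_contra hcon
    push Not at hcon
    have : ∀ i, f^[i] p < b := by
      intro i
      induction i with
      | zero => simpa using hpb
      | succ j ih => exact hcon j ih
    have := this (m-1)
    rw [← hb] at this
    exact lt_irrefl _ this
  rw [iterate_succ_apply'] at hi2
  obtain ⟨v, ⟨hv1, hv2⟩, hv3⟩ := intermediate_value_Icc' hi1.le hf.continuousOn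
    (show b ∈ Icc (f b) (f (f^[i] p)) from ⟨by rw [hfb]; exact hpb.le, hi2⟩)
  have hvb : v < b := by
    rcases hv2.lt_or_eq with h | h
    · exact h
    · rw [h, hfb] at hv3; linarith
  have hpv : p < v := by
    rcases ((hmin i).trans hv1).lt_or_eq with h | h
    · exact h
    · exfalso
      apply hne 2 (by omega) (by omega)
      show f (f p) = p
      rw [h, hv3, hfb, h]
  obtain ⟨y, hy1, hy2, hy3, hy4⟩ := aux_last (h := fun x => x - f (f x)) (by fun_prop) (c := 0)
    hpv.le (by have := hmin 2; simp only [iterate_succ, iterate_zero, comp, id] at this; linarith)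
    (by rw [hv3, hfb]; linarith)
  have hg : ∀ x, y < x → x ≤ v → f (f x) < x := fun x h1 h2 => by
    have := hy4 x h1 h2; linarith
  have hyy : f (f y) = y := by linarith
  have hup : ∀ x, y < x → x ≤ v → x < f x := by
    intro x h1 h2
    by_contra hcon
    obtain ⟨w, ⟨hw1, hw2⟩, hw3⟩ := intermediate_value_Icc h2
      (f := fun x => f x - x) (by fun_prop)
      (show (0:ℝ) ∈ _ from ⟨by linarith, by rw [hv3]; linarith⟩)
    have h3 : f w = w := by linarith
    have := hg w (by linarith) hw2
    rw [h3, h3] at this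
    exact lt_irrefl _ this
  have hyne : f y ≠ y := by
    intro h
    have : ∀ᶠ x in nhdsWithin y (Ioi y), f x < v ∧ x < v ∧ y < x := by
      have e1 : ∀ᶠ x in nhds y, f x < v :=
        hf.continuousAt.eventually_lt continuousAt_const (by rw [h]; exact hy2)
      have e2 : ∀ᶠ x in nhds y, x < v := eventually_lt_nhds hy2
      filter_upwards [nhdsWithin_le_nhds e1, nhdsWithin_le_nhds e2, self_mem_nhdsWithin]
        with x a b c using ⟨a, b, c⟩
    obtain ⟨x, h1, h2, h3⟩ := this.exists
    have h4 := hup x h3 h2.le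
    have h5 := hup (f x) (by linarith) h1.le
    have h6 := hg x h3 h2.le
    linarith
  have hyge : y < f y := by
    refine lt_of_le_of_ne ?_ hyne.symm
    by_contra hcon
    push Not at hcon
    obtain ⟨w, ⟨hw1, hw2⟩, hw3⟩ := intermediate_value_Icc hy2.le
      (f := fun x => f x - x) (by fun_prop)
      (show (0:ℝ) ∈ _ from ⟨by linarith, by rw [hv3]; linarith⟩)
    rcases hw1.lt_or_eq with h | h
    · have := hup w h hw2; linarith
    · apply hyne; rw [h]; linarith
  refine ⟨p, b, v, y, hpm, hfb, hb.symm, hy1, hy2, hvb, hv3, hyy, hg, fun x h1 h2 => ?_, hmin⟩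
  rcases h1.lt_or_eq with h | h
  · exact hup x h h2
  · rw [← h]; exact hyge

lemma odd_iter {f : ℝ → ℝ} {y : ℝ} (hy : f (f y) = y) (n : ℕ) (hn : Odd n) :
    f^[n] y = f y := by
  obtain ⟨j, rfl⟩ := hn
  have : f^[2 * j] y = y := IsPeriodicPt.mul_const (show IsPeriodicPt f 2 y from hy) j
  rw [show 2 * j + 1 = (2 * j).succ by rfl, iterate_succ_apply' f (2 * j), this]

lemma odd_step {f : ℝ → ℝ} (hf : Continuous f) {m : ℕ} (hm : 3 ≤ m) (hodd : Odd m) {x0 : ℝ}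
    (hx : minimalPeriod f x0 = m) : ∃ u, minimalPeriod f u = m + 2 := by
  obtain ⟨p, b, v, y, hpm, hfb, hb, hpy, hyv, hvb, hfv, hyy, hg, hup, hmin⟩ := setup hf hm hx
  have hodd2 : Odd (m + 2) := hodd.add_even (by decide)
  have hpp : f^[m] p = p := by rw [← hpm]; exact iterate_minimalPeriod
  obtain ⟨u, hu1, hu2, hu3, hu4⟩ := aux_first (h := fun x => f^[m+2] x - x)
    ((hf.iterate _).sub continuous_id) (c := 0) hyv.le
    (by rw [odd_iter hyy _ hodd2]; linarith [hup y le_rfl hyv.le])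
    (by
      rw [iterate_add_apply]
      have : f^[2] v = p := by show f (f v) = p; rw [hfv, hfb]
      rw [this, hpp]; linarith)
  have huu : f^[m+2] u = u := by linarith
  obtain ⟨k, hk⟩ : ∃ k, k = minimalPeriod f u := ⟨_, rfl⟩
  have hdvd : k ∣ m + 2 := hk ▸ IsPeriodicPt.minimalPeriod_dvd huu
  have hkodd : Odd k := Odd.of_dvd_nat hodd2 hdvd
  refine ⟨u, ?_⟩
  rw [← hk]
  by_contra hne
  have hkle := Nat.le_of_dvd (by omega) hdvd
  have hku : f^[k] u = u := by rw [hk]; exact iterate_minimalPeriod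
  have claim : ∀ n : ℕ, ∃ x, y < x ∧ x ≤ u ∧ (0 < n → x < u) ∧ f^[k + 2 * n] x = x := by
    intro n
    induction n with
    | zero => exact ⟨u, hu1, le_rfl, by simp, by simpa using hku⟩
    | succ n ih =>
      obtain ⟨x, h1, h2, -, h4⟩ := ih
      have hgx := hg x h1 (by linarith)
      have e1 : f^[k + 2 * (n+1)] x = f (f x) := by
        rw [show k + 2 * (n+1) = 2 + (k + 2 * n) by ring, iterate_add_apply, h4]; rfl
      have e2 : f^[k + 2 * (n+1)] y = f y := odd_iter hyy _ (hkodd.add_even ⟨n+1, by ring⟩)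
      obtain ⟨w, hw1, hw2, hw3, -⟩ := aux_first (h := fun x => f^[k + 2 * (n+1)] x - x)
        ((hf.iterate _).sub continuous_id) (c := 0) h1.le
        (by rw [e2]; linarith [hup y le_rfl hyv.le]) (by rw [e1]; linarith)
      have hwx : w < x := by
        rcases hw2.lt_or_eq with h | h
        · exact h
        · rw [h, e1] at hw3; linarith
      exact ⟨w, hw1, by linarith, fun _ => by linarith, by linarith⟩
  obtain ⟨j, hj⟩ := hkodd
  obtain ⟨j', hj'⟩ := hodd2
  obtain ⟨x, h1, h2, h3, h4⟩ := claim (j' - j)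
  have := h3 (by omega)
  rw [show k + 2 * (j' - j) = m + 2 by omega] at h4
  have := hu4 x h1.le this
  linarith

lemma even_step {f : ℝ → ℝ} (hf : Continuous f) {m : ℕ} (hm : 3 ≤ m) (hodd : Odd m) {x0 : ℝ}
    (hx : minimalPeriod f x0 = m) (n : ℕ) (hn : 2 ≤ n) : ∃ u, minimalPeriod f u = 2 * n := by
  obtain ⟨p, b, v, y, hpm, hfb, hb, hpy, hyv, hvb, hfv, hyy, hg, hup, hmin⟩ := setup hf hm hx
  obtain ⟨g, hgdef⟩ : ∃ g : ℝ → ℝ, g = f^[2] := ⟨_, rfl⟩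
  have hgf : ∀ x, g x = f (f x) := fun x => by rw [hgdef]; rfl
  have hgc : Continuous g := by rw [hgdef]; exact hf.iterate 2
  have hgi : ∀ j x, g^[j] x = f^[2 * j] x := fun j x => by rw [hgdef, ← iterate_mul]
  simp only [← hgf] at hyy hg
  have hgv : g v = p := by rw [hgf, hfv, hfb]
  have hgb : g b ≠ b := by
    intro h
    rw [hgf] at h
    have : f^[2] p = p := by
      show f (f p) = p
      rw [← hfb, h]
    have := IsPeriodicPt.minimalPeriod_le (by norm_num) this
    omega
  -- a fixed point of f between v and b
  obtain ⟨z, ⟨hz1, hz2⟩, hz3⟩ := intermediate_value_Icc' hvb.le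
      (f := fun x => f x - x) (by fun_prop)
      (show (0:ℝ) ∈ _ from ⟨by rw [hfb]; linarith, by rw [hfv]; linarith⟩)
  have hfz : f z = z := by linarith
  obtain ⟨z0, hv0, hz0z, hz0, hz0'⟩ := aux_first (h := fun x => x - g x)
    (continuous_id.sub hgc) (c := 0) hz1 (by rw [hgv]; linarith) (by rw [hgf, hfz, hfz]; linarith)
  have hgz0 : g z0 = z0 := by linarith
  have hg2 : ∀ x, y < x → x < z0 → g x < x := by
    intro x h1 h2
    rcases le_total x v with h | h
    · exact hg x h1 h
    · have := hz0' x h h2; linarith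
  have hup2 : ∀ x, y < x → x < z0 → x < f x := by
    intro x h1 h2
    rcases le_total x v with h | h
    · exact hup x h1.le h
    · by_contra hcon
      obtain ⟨w, ⟨hw1, hw2⟩, hw3⟩ := intermediate_value_Icc' h
        (f := fun x => f x - x) (by fun_prop)
        (show (0:ℝ) ∈ _ from ⟨by linarith, by rw [hfv]; linarith⟩)
      have h3 : f w = w := by linarith
      have := hg2 w (by linarith) (by linarith)
      rw [hgf, h3, h3] at this
      exact lt_irrefl _ this
  have hbig : ∀ x, y < x → x < z0 → z0 ≤ f x := by
    intro x h1 h2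
    by_contra hcon
    push Not at hcon
    have h3 := hup2 x h1 h2
    have h4 := hup2 (f x) (by linarith) hcon
    have h5 := hg2 x h1 h2
    rw [hgf] at h5
    linarith
  have hz0b : z0 < b := by
    refine lt_of_le_of_ne (by linarith) ?_
    intro h
    rw [h] at hgz0
    exact hgb hgz0
  -- a point of the orbit left of z0 mapped right of z0
  obtain ⟨q, hq1, hq2, hq3⟩ : ∃ q, p ≤ q ∧ q ≤ y ∧ z0 ≤ g q := by
    obtain ⟨r, hr⟩ := hodd
    have hbr : g^[r] p = b := by rw [hgi, ← hb]; congr 2; omega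
    by_contra hcon
    push Not at hcon
    have : ∀ i, g^[i] p < z0 := by
      intro i
      induction i with
      | zero => simp; linarith
      | succ j ih =>
        rw [iterate_succ_apply']
        rcases le_or_gt (g^[j] p) y with h | h
        · exact hcon _ (by rw [hgi]; exact hmin _) h
        · linarith [hg2 _ h ih]
    have := this r
    rw [hbr] at this
    linarith
  obtain ⟨d, hd1, hd2, hd3, hd4⟩ := aux_last (h := fun x => - g x) hgc.neg (c := -z0) hq2
    (by linarith) (by rw [hyy]; linarith)
  have hgd : g d = z0 := by linarith
  have chain : ∀ i : ℕ, ∃ t, v ≤ t ∧ t < z0 ∧ g^[i] t = v ∧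
      ∀ x, t ≤ x → x ≤ z0 → ∀ j ≤ i, v ≤ g^[j] x ∧ g^[j] x ≤ z0 := by
    intro i
    induction i with
    | zero =>
      refine ⟨v, le_rfl, hv0, rfl, fun x h1 h2 j hj => ?_⟩
      obtain rfl : j = 0 := by omega
      exact ⟨h1, h2⟩
    | succ i ih =>
      obtain ⟨t, h1, h2, h3, h4⟩ := ih
      obtain ⟨s, s1, s2, s3, s4⟩ := aux_last hgc (c := t) hv0.le (by rw [hgv]; linarith)
        (by rw [hgz0]; exact h2)
      refine ⟨s, s1, s2, by rw [iterate_succ_apply, s3, h3], fun x hx1 hx2 j hj => ?_⟩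
      cases j with
      | zero => exact ⟨by simp; linarith, by simpa using hx2⟩
      | succ j =>
        rw [iterate_succ_apply]
        refine h4 _ ?_ ?_ j (by omega)
        · rcases hx1.lt_or_eq with h | h
          · exact (s4 x h hx2).le
          · rw [← h, s3]
        · rcases hx2.lt_or_eq with h | h
          · linarith [hg2 x (by linarith) h]
          · rw [h, hgz0]
  obtain ⟨i, rfl⟩ : ∃ i, n = i + 2 := ⟨n - 2, by omega⟩
  obtain ⟨t, t1, t2, t3, t4⟩ := chain i
  obtain ⟨e, e1, e2, e3, e4⟩ := aux_first hgc (c := t) hd2.le (by rw [hgd]; exact t2)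
    (by rw [hyy]; linarith)
  have hz0fix : ∀ j, g^[j] z0 = z0 := fun j => iterate_fixed hgz0 j
  obtain ⟨x, ⟨hx1, hx2⟩, hx3⟩ := intermediate_value_Icc' e1.le
      (f := fun x => g^[i+2] x - x) (by exact ((hgc.iterate _).sub continuous_id).continuousOn)
      (show (0:ℝ) ∈ _ from ⟨by
        rw [iterate_succ_apply, e3, iterate_succ_apply', t3, hgv]; linarith, by
        rw [iterate_succ_apply, hgd, hz0fix]; linarith⟩)
  have hxp : g^[i+2] x = x := by linarith
  have hxy : x ≤ y := by linarith
  have hgx : t ≤ g x ∧ g x ≤ z0 := by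
    constructor
    · rcases hx2.lt_or_eq with h | h
      · exact (e4 x hx1 h).le
      · rw [h, e3]
    · rcases hx1.lt_or_eq with h | h
      · linarith [hd4 x h (by linarith)]
      · rw [← h, hgd]
  have horb : ∀ j, 0 < j → j < i + 2 → v ≤ g^[j] x ∧ g^[j] x ≤ z0 := by
    intro j h1 h2
    obtain ⟨l, rfl⟩ : ∃ l, j = l + 1 := ⟨j - 1, by omega⟩
    rw [iterate_succ_apply]
    exact t4 _ hgx.1 hgx.2 l (by omega)
  have hmpg : minimalPeriod g x = i + 2 := by
    have h1 : minimalPeriod g x ≤ i + 2 := IsPeriodicPt.minimalPeriod_le (by omega) hxp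
    have h2 : 0 < minimalPeriod g x := IsPeriodicPt.minimalPeriod_pos (by omega) hxp
    by_contra h3
    have h4 := (horb _ h2 (by omega)).1
    rw [iterate_minimalPeriod] at h4
    linarith
  have hle : ∀ j, g^[j] x ≤ z0 := by
    intro j
    rw [← iterate_mod_minimalPeriod_eq, hmpg]
    rcases Nat.eq_zero_or_pos (j % (i+2)) with h | h
    · rw [h]; simp; linarith
    · exact (horb _ h (Nat.mod_lt _ (by omega))).2
  have hnez : ∀ j, g^[j] x ≠ z0 := by
    intro j hj
    have h1 : g^[(i+2) * j] x = x := IsPeriodicPt.mul_const hxp j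
    rw [show (i+2) * j = (i+1) * j + j by ring, iterate_add_apply, hj, hz0fix] at h1
    linarith
  refine ⟨x, ?_⟩
  obtain ⟨N, hN⟩ : ∃ N, N = minimalPeriod f x := ⟨_, rfl⟩
  have hNpos : 0 < N := by
    rw [hN]
    exact IsPeriodicPt.minimalPeriod_pos (n := 2 * (i+2)) (by omega)
      (by show f^[_] x = x; rw [← hgi, hxp])
  rw [hgdef, minimalPeriod_iterate_eq_div_gcd (by norm_num), ← hN] at hmpg
  rw [← hN]
  rcases Nat.even_or_odd N with hev | hod
  · rw [Nat.gcd_eq_right hev.two_dvd] at hmpg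
    have := hev.two_dvd
    omega
  · exfalso
    obtain ⟨r, hr⟩ := hod
    have h1 : f (g x) = g^[r+2] x := by
      rw [hgi, hgf, show 2 * (r+2) = 3 + N by omega, iterate_add_apply, hN, iterate_minimalPeriod]
      rfl
    have h2 : g x < z0 := lt_of_le_of_ne hgx.2 (hnez 1)
    have h3 := hbig (g x) (by linarith [hgx.1]) h2
    exact hnez (r+2) (le_antisymm (hle _) (h1 ▸ h3))

lemma gcd_aux {N j e : ℕ} (he : 0 < e) (h : N / N.gcd (2 ^ j) = e) :
    ∃ i ≤ j, N = 2 ^ i * e ∧ (Even e → i = j) := by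
  obtain ⟨i, hi, hgi⟩ := (Nat.dvd_prime_pow Nat.prime_two).mp (Nat.gcd_dvd_right N (2 ^ j))
  have hN : N = 2 ^ i * e := by
    rw [← h, ← hgi]; exact (Nat.mul_div_cancel' (Nat.gcd_dvd_left N (2 ^ j))).symm
  refine ⟨i, hi, hN, fun hev => ?_⟩
  by_contra hne
  have h1 : 2 ^ (i+1) ∣ N := by
    rw [hN, pow_succ]; exact Nat.mul_dvd_mul_left _ hev.two_dvd
  have h2 : 2 ^ (i+1) ∣ 2 ^ j := pow_dvd_pow 2 (by omega)
  have h3 := Nat.dvd_gcd h1 h2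
  rw [hgi] at h3
  have := (Nat.pow_dvd_pow_iff_le_right (by norm_num : 1 < 2)).mp h3
  omega

lemma global_thm {f : ℝ → ℝ} (hf : Continuous f) {m k : ℕ} (hm : 3 ≤ m) (hodd : Odd m) {x : ℝ}
    (hx : minimalPeriod f x = 2 ^ k * m) :
    (∃ y, minimalPeriod f y = 2 ^ k * (m + 2)) ∧
      (∃ z, minimalPeriod f z = 2 ^ (k + 1) * 3) := by
  have hper : ∀ (j e : ℕ) (w : ℝ), 0 < e → minimalPeriod f w = 2 ^ j * e →
      minimalPeriod f^[2 ^ j] w = e := by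
    intro j e w _ hw
    rw [minimalPeriod_iterate_eq_div_gcd (by positivity), hw, Nat.gcd_mul_right_left]
    exact Nat.mul_div_cancel_left _ (by positivity)
  have hxg := hper k m x (by omega) hx
  constructor
  · obtain ⟨y, hy⟩ := odd_step (hf.iterate (2 ^ k)) hm hodd hxg
    rw [minimalPeriod_iterate_eq_div_gcd (by positivity)] at hy
    obtain ⟨j, hj, hN, -⟩ := gcd_aux (by omega) hy
    rcases hj.lt_or_eq with h | h
    · have hyj := hper j (m+2) y (by omega) hN
      have hpos : 0 < 2 ^ (k - j - 1) := by positivity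
      obtain ⟨w, hw⟩ := even_step (hf.iterate (2 ^ j)) (by omega)
        (hodd.add_even (by decide)) hyj (2 ^ (k - j - 1) * (m + 2)) (by nlinarith)
      rw [minimalPeriod_iterate_eq_div_gcd (by positivity)] at hw
      obtain ⟨i, hi, hN, hev⟩ := gcd_aux (by positivity) hw
      refine ⟨w, ?_⟩
      rw [hN, hev (even_two_mul _), ← mul_assoc, ← mul_assoc, ← pow_succ, ← pow_add]
      congr 2
      omega
    · exact ⟨y, h ▸ hN⟩
  · obtain ⟨z, hz⟩ := even_step (hf.iterate (2 ^ k)) hm hodd hxg 3 (by norm_num)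
    rw [minimalPeriod_iterate_eq_div_gcd (by positivity)] at hz
    obtain ⟨i, hi, hN, hev⟩ := gcd_aux (by norm_num) hz
    refine ⟨z, ?_⟩
    rw [hN, hev (by decide)]
    ring

lemma periodPt_iff {f : ℝ → ℝ} {n : ℕ} (hn : 0 < n) (x : ℝ) :
    PeriodPt f n x ↔ minimalPeriod f x = n := by
  constructor
  · rintro ⟨h1, h2⟩
    have h3 : minimalPeriod f x ≤ n := IsPeriodicPt.minimalPeriod_le hn h1
    have h4 : 0 < minimalPeriod f x := IsPeriodicPt.minimalPeriod_pos hn h1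
    by_contra h5
    exact h2 _ h4 (by omega) iterate_minimalPeriod
  · rintro rfl
    refine ⟨iterate_minimalPeriod, fun i h1 h2 h3 => ?_⟩
    have := IsPeriodicPt.minimalPeriod_le h1 h3
    omega

theorem doubling_odd_period_forcing (a b : ℝ) (hab : a ≤ b) (f : ℝ → ℝ)
    (hcont : ContinuousOn f (Set.Icc a b))
    (hmaps : Set.MapsTo f (Set.Icc a b) (Set.Icc a b))
    (m : ℕ) (hm : 3 ≤ m) (hodd : Odd m) (k : ℕ) (hk : 1 ≤ k)
    (x : ℝ) (hx : x ∈ Set.Icc a b) (hper : PeriodPt f (2 ^ k * m) x) :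
    (∃ y ∈ Set.Icc a b, PeriodPt f (2 ^ k * (m + 2)) y) ∧
      (∃ z ∈ Set.Icc a b, PeriodPt f (2 ^ (k + 1) * 3) z) := by
  obtain ⟨F, hF⟩ : ∃ F : ℝ → ℝ, F = fun t => f (projIcc a b hab t) := ⟨_, rfl⟩
  have hFc : Continuous F := by
    rw [hF]
    exact hcont.comp_continuous (by fun_prop) (fun t => (projIcc a b hab t).2)
  have hFI : ∀ t, F t ∈ Icc a b := fun t => by rw [hF]; exact hmaps (projIcc a b hab t).2
  have hFf : ∀ t ∈ Icc a b, F t = f t := fun t ht => by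
    rw [hF]; simp only; rw [projIcc_of_mem hab ht]
  have hit : ∀ t ∈ Icc a b, ∀ i, F^[i] t = f^[i] t := by
    intro t ht i
    induction i generalizing t with
    | zero => rfl
    | succ i ih => rw [iterate_succ_apply, ih _ (hFI t), hFf t ht, iterate_succ_apply]
  have hiff : ∀ t ∈ Icc a b, ∀ n, PeriodPt F n t ↔ PeriodPt f n t := by
    intro t ht n
    simp only [PeriodPt, hit t ht]
  have hmem : ∀ t n, 0 < n → minimalPeriod F t = n → t ∈ Icc a b := by
    intro t n hn h
    have h1 : F^[minimalPeriod F t] t = t := iterate_minimalPeriod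
    obtain ⟨l, rfl⟩ : ∃ l, n = l + 1 := ⟨n - 1, by omega⟩
    rw [h, iterate_succ_apply'] at h1
    rw [← h1]
    exact hFI _
  have hx' := (periodPt_iff (by positivity) x).mp ((hiff x hx _).mpr hper)
  obtain ⟨⟨y, hy⟩, ⟨z, hz⟩⟩ := global_thm hFc hm hodd hx'
  have hyI := hmem y _ (by positivity) hy
  have hzI := hmem z _ (by positivity) hz
  exact ⟨⟨y, hyI, (hiff y hyI _).mp ((periodPt_iff (by positivity) y).mpr hy)⟩,
    ⟨z, hzI, (hiff z hzI _).mp ((periodPt_iff (by positivity) z).mpr hz)⟩⟩
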